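/- arXiv:cs/0509032 — 2 statements merged into one kernel-verified Lean document; each statement's English description precedes it below -/
import Mathlib

section
/- Let k ≥ 2 be an integer and let α > 1/k, r > 0 and 0 < p ≤ (k-1)/k be real constants with r < r_cr = -α/ln(1-p). Let N denote the number of satisfying assignments of a random instance of RB(k,n,α,r,p). Then E[N²]/E[N]² → 1 as n → ∞. -/
namespace RB

/-- A (raw) constraint over `n` variables with common domain `Fin d`:
a scope (set of variables) together with a set of forbidden tuples,
i.e. forbidden functions from the scope to the domain. -/
abbrev Constraint (n d : ℕ) : Type := Σ s : Finset (Fin n), Finset (↥s → Fin d)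

/-- A constraint of model RB: scope of exactly `k` variables and exactly `q` forbidden tuples. -/
abbrev ValidConstraint (k n d q : ℕ) : Type :=
  {c : Constraint n d // c.1.card = k ∧ c.2.card = q}

/-- An instance of model RB: a sequence of `m` constraints (chosen with repetition). -/
abbrev Instance (k n d q m : ℕ) : Type := Fin m → ValidConstraint k n d q

/-- An assignment satisfies a constraint iff the tuple it induces on the scope is not forbidden. -/
def satisfies {n d : ℕ} (a : Fin n → Fin d) (c : Constraint n d) : Prop :=
  (fun i : ↥c.1 => a i.1) ∉ c.2

/-- An assignment satisfies an instance iff it satisfies all its constraints. -/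
def satInstance {k n d q m : ℕ} (a : Fin n → Fin d) (P : Instance k n d q m) : Prop :=
  ∀ i : Fin m, satisfies a (P i).1

open scoped Classical in
/-- The probability (uniform over instances, i.e. constraints chosen independently,
uniformly and with repetition) that a random instance is satisfiable. -/
noncomputable def prSat (k n d q m : ℕ) : ℝ :=
  ((Finset.univ.filter fun P : Instance k n d q m =>
      ∃ a : Fin n → Fin d, satInstance a P).card : ℝ)
    / (Fintype.card (Instance k n d q m))

/-- Domain size `d = ⌈n^α⌉`. -/
noncomputable def dOf (α : ℝ) (n : ℕ) : ℕ := ⌈(n : ℝ) ^ α⌉₊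

/-- Number of constraints `m = ⌈r · n · ln n⌉`. -/
noncomputable def mOf (r : ℝ) (n : ℕ) : ℕ := ⌈r * n * Real.log n⌉₊

/-- Number of forbidden tuples `q = ⌈p · d^k⌉`. -/
noncomputable def qOf (p : ℝ) (k d : ℕ) : ℕ := ⌈p * (d : ℝ) ^ k⌉₊

/-- Probability that a random instance of `RB(k,n,α,r,p)` is satisfiable. -/
noncomputable def prSatRB (k : ℕ) (α r p : ℝ) (n : ℕ) : ℝ :=
  prSat k n (dOf α n) (qOf p k (dOf α n)) (mOf r n)

end RB

namespace RB

open scoped Classical in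
/-- The number of satisfying assignments (solutions) of an instance. -/
noncomputable def numSolutions {k n d q m : ℕ} (P : Instance k n d q m) : ℕ :=
  (Finset.univ.filter fun a : Fin n → Fin d => satInstance a P).card

/-- The first moment `E[N]` of the number of solutions of a random instance
(uniform over instances, i.e. constraints chosen independently, uniformly and
with repetition). -/
noncomputable def expN (k n d q m : ℕ) : ℝ :=
  (∑ P : Instance k n d q m, (numSolutions P : ℝ)) / (Fintype.card (Instance k n d q m))

/-- The second moment `E[N²]` of the number of solutions of a random instance. -/
noncomputable def expNsq (k n d q m : ℕ) : ℝ :=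
  (∑ P : Instance k n d q m, (numSolutions P : ℝ) ^ 2) / (Fintype.card (Instance k n d q m))

open scoped Classical in
/-- The expected number of solutions `E_f[N] = E[N·1_{t ∈ S}] / Pr[t ∈ S]` of instances
forced to admit the assignment `t` as a solution, i.e. of the uniform model conditioned
on the event that `t` is a solution. -/
noncomputable def expNForced (k n d q m : ℕ) (t : Fin n → Fin d) : ℝ :=
  ((∑ P : Instance k n d q m, if satInstance t P then (numSolutions P : ℝ) else 0)
      / (Fintype.card (Instance k n d q m)))
    / (((Finset.univ.filter fun P : Instance k n d q m => satInstance t P).card : ℝ)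
      / (Fintype.card (Instance k n d q m)))

end RB

open Filter Topology

/-!
Dividing the second moment by the square of the first expresses `E[N²] / E[N]²` as the mean, over
two independent uniform assignments with overlap `S`, of the `m`-th power of a number that is at
most `1 + (S / n) ^ k * κ`, where `κ` is any constant exceeding `c = p / (1 - p)`; the slack absorbs
the rounding of the number of forbidden tuples. The ratio is at least `1` by Cauchy–Schwarz.

For the upper bound fix `1 / k < β < α` and a small `ε > 0`. If `S / n ≤ n ^ (-β)`, the power is
`1 + o(1)` because `m * n ^ (-β * k) → 0`. Larger overlaps satisfy
`P(S = s) ≤ (e * n / (s * d)) ^ s`, which beats the power by a geometric factor `ρ ^ s`, where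
`ρ → 0`: for `S / n ≤ ε` because `β < α` and `x ^ k ≤ ε ^ (k - 1) * x`, and for `S / n > ε` because
`r * log (1 + c) < α` and `log (1 + c * x ^ k) ≤ x * log (1 + c)`. The last inequality is convexity
of the left-hand side on `[0, 1]`, which is what `c ≤ k - 1`, that is `p ≤ (k - 1) / k`, provides.
-/

namespace RB

open Finset Real
open scoped BigOperators

/-! ### Elementary inequalities -/

lemma cast_choose_pred {D q : ℕ} (hq : q ≤ D) :
    ((D - 1).choose q : ℝ) = (1 - q / D) * D.choose q := by
  rcases D with _ | D
  · simp [Nat.le_zero.1 hq]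
  have h : (D.choose q : ℝ) * (D + 1) = (D + 1).choose q * (D + 1 - q) := by
    have := Nat.choose_mul_succ_eq D q
    rw [← Nat.cast_add_one, ← Nat.cast_sub hq]
    exact_mod_cast this
  rw [Nat.add_sub_cancel]
  push_cast
  field_simp
  linarith

lemma cast_choose_sub_two_le {D q : ℕ} (hq : q ≤ D) :
    ((D - 2).choose q : ℝ) ≤ (1 - q / D) ^ 2 * D.choose q := by
  rcases D with _ | _ | D
  · simp [Nat.le_zero.1 hq]
  · interval_cases q <;> simp
  rcases hq.eq_or_lt with rfl | hq
  · rw [Nat.choose_eq_zero_of_lt (by omega), Nat.cast_zero]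
    positivity
  have : (q : ℝ) ≤ D + 1 := by exact_mod_cast Nat.le_of_lt_succ hq
  calc ((D + 2 - 2).choose q : ℝ) = (1 - q / (D + 1)) * (D + 2 - 1).choose q := by
        simpa using cast_choose_pred (Nat.le_of_lt_succ hq)
    _ ≤ (1 - q / (D + 2)) * (D + 2 - 1).choose q := by gcongr; simp
    _ = (1 - q / (D + 2 : ℕ)) ^ 2 * (D + 2).choose q := by
        rw [cast_choose_pred hq.le]; push_cast; ring

lemma choose_div_choose_le_div_pow {s n : ℕ} (hs : s ≤ n) (k : ℕ) :
    (s.choose k : ℝ) / n.choose k ≤ (s / n) ^ k := by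
  rcases lt_or_ge n k with hnk | hkn
  · simp only [Nat.choose_eq_zero_of_lt hnk, Nat.cast_zero, div_zero]
    positivity
  have hdesc : s.descFactorial k * n ^ k ≤ n.descFactorial k * s ^ k := by
    have hprod (a b : ℕ) : a.descFactorial k * b ^ k = ∏ i ∈ range k, (a - i) * b := by
      rw [Nat.descFactorial_eq_prod_range, ← prod_mul_pow_card, card_range]
    rw [hprod, hprod]
    refine prod_le_prod' fun i _ => ?_
    rw [Nat.sub_mul, Nat.sub_mul, mul_comm s n]
    gcongr
  have hchoose : s.choose k * n ^ k ≤ s ^ k * n.choose k := by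
    refine Nat.le_of_mul_le_mul_left ?_ k.factorial_pos
    calc k.factorial * (s.choose k * n ^ k) = s.descFactorial k * n ^ k := by
          rw [Nat.descFactorial_eq_factorial_mul_choose, mul_assoc]
      _ ≤ n.descFactorial k * s ^ k := hdesc
      _ = k.factorial * (s ^ k * n.choose k) := by
          rw [Nat.descFactorial_eq_factorial_mul_choose]; ring
  have hpow : 0 < n ^ k := Nat.pow_pos_iff.2 (by omega)
  have hpos : 0 < n.choose k := Nat.choose_pos hkn
  rw [div_pow, div_le_div_iff₀ (by exact_mod_cast hpos) (by exact_mod_cast hpow)]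
  exact_mod_cast hchoose

lemma choose_le_exp_one_mul_div_pow (n s : ℕ) :
    (n.choose s : ℝ) ≤ (exp 1 * n / s) ^ s := by
  have hfac : (s : ℝ) ^ s / s.factorial ≤ exp 1 ^ s := by
    simpa [← exp_nat_mul] using Real.pow_div_factorial_le_exp _ s.cast_nonneg s
  calc (n.choose s : ℝ) ≤ n ^ s / s.factorial := Nat.choose_le_pow_div s n
    _ = s ^ s / s.factorial * (n / s) ^ s := by
        rcases s.eq_zero_or_pos with rfl | hs
        · simp
        · rw [div_pow]; field_simp
    _ ≤ exp 1 ^ s * (n / s) ^ s := by gcongr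
    _ = (exp 1 * n / s) ^ s := by rw [← mul_pow, mul_div_assoc]

lemma convexOn_log_one_add_pow_mul {k : ℕ} {c : ℝ} (hc : 0 ≤ c) (hck : c ≤ k - 1) :
    ConvexOn ℝ (Set.Icc 0 1) fun x : ℝ => log (1 + x ^ k * c) := by
  have hpos : ∀ x : ℝ, 0 ≤ x → 0 < 1 + x ^ k * c := fun x hx => by positivity
  have hlin (j : ℕ) (x : ℝ) : HasDerivAt (fun x : ℝ => x ^ j * c) (j * (x ^ (j - 1) * c)) x := by
    simpa [mul_assoc] using (hasDerivAt_pow j x).mul_const c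
  refine convexOn_of_hasDerivWithinAt2_nonneg (convex_Icc 0 1)
    (f' := fun x => k * (x ^ (k - 1) * c) / (1 + x ^ k * c))
    (f'' := fun x => k * c * x ^ (k - 2) * (k - 1 - x ^ k * c) / (1 + x ^ k * c) ^ 2) ?_ ?_ ?_ ?_
  · exact ContinuousOn.log (by fun_prop) fun x hx => (hpos x hx.1).ne'
  · rw [interior_Icc]
    intro x hx
    exact (((hlin k x).const_add 1).log (hpos x hx.1.le).ne').hasDerivWithinAt
  · rw [interior_Icc]
    intro x hx
    refine (HasDerivAt.congr_deriv (((hlin (k - 1) x).const_mul (k : ℝ)).fun_div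
      ((hlin k x).const_add 1) (hpos x hx.1.le).ne') ?_).hasDerivWithinAt
    rcases k with _ | _ | k
    · simp
    · simp [show c = 0 by norm_num at hck; linarith]
    · push_cast [Nat.add_sub_cancel]
      ring
  · rw [interior_Icc]
    rintro x ⟨hx0, hx1⟩
    have hxk : x ^ k * c ≤ k - 1 := (mul_le_of_le_one_left hc (pow_le_one₀ hx0.le hx1.le)).trans hck
    have := sub_nonneg.2 hxk
    positivity

lemma one_add_pow_mul_le_exp {k : ℕ} {c x : ℝ} (hc : 0 ≤ c) (hck : c ≤ k - 1) (hx0 : 0 ≤ x)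
    (hx1 : x ≤ 1) : 1 + x ^ k * c ≤ exp (x * log (1 + c)) := by
  have hk : k ≠ 0 := by rintro rfl; norm_num at hck; linarith
  have hconv := (convexOn_log_one_add_pow_mul hc hck).2 (x := 0) (y := 1) (by simp) (by simp)
    (sub_nonneg.2 hx1) hx0 (by ring)
  rw [← log_le_iff_le_exp (by positivity)]
  simpa [hk] using hconv

lemma one_add_pow_mul_le_exp_mul_pow_pred {k : ℕ} {κ ε x : ℝ} (hk : k ≠ 0) (hκ : 0 ≤ κ)
    (hx0 : 0 ≤ x) (hxε : x ≤ ε) : 1 + x ^ k * κ ≤ exp (x * (ε ^ (k - 1) * κ)) := by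
  calc 1 + x ^ k * κ = x * (x ^ (k - 1) * κ) + 1 := by
        rw [← mul_assoc, mul_pow_sub_one hk, add_comm]
    _ ≤ x * (ε ^ (k - 1) * κ) + 1 := by gcongr
    _ ≤ exp (x * (ε ^ (k - 1) * κ)) := add_one_le_exp _

lemma one_add_pow_mul_add_le_exp {k : ℕ} {c η x : ℝ} (hc : 0 ≤ c) (hck : c ≤ k - 1) (hη : 0 ≤ η)
    (hx0 : 0 ≤ x) (hx1 : x ≤ 1) : 1 + x ^ k * (c + η) ≤ exp (x * (log (1 + c) + η)) := by
  have hk : k ≠ 0 := by rintro rfl; norm_num at hck; linarith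
  have hxk : x ^ k * η ≤ x * η := by gcongr; exact pow_le_of_le_one hx0 hx1 hk
  have hxc : 0 ≤ x ^ k * c * (x * η) := by positivity
  calc 1 + x ^ k * (c + η) ≤ (1 + x ^ k * c) * (x * η + 1) := by linarith
    _ ≤ exp (x * log (1 + c)) * exp (x * η) := by
        gcongr
        · exact one_add_pow_mul_le_exp hc hck hx0 hx1
        · exact add_one_le_exp _
    _ = exp (x * (log (1 + c) + η)) := by rw [← exp_add, mul_add]

/-! ### Moments of the number of solutions -/

variable {n d : ℕ}

open scoped Classical in
/-- The probability that a single random constraint of model RB is satisfied by every assignment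
in `A`. -/
noncomputable def satProb (k q : ℕ) (A : Finset (Fin n → Fin d)) : ℝ :=
  #{c : ValidConstraint k n d q | ∀ a ∈ A, satisfies a c.1} / Fintype.card (ValidConstraint k n d q)

open scoped Classical in
lemma card_filter_forall_satisfies (k q : ℕ) (A : Finset (Fin n → Fin d)) :
    #{c : ValidConstraint k n d q | ∀ a ∈ A, satisfies a c.1} =
      ∑ s ∈ powersetCard k univ, (d ^ k - #(A.image s.restrict)).choose q := by
  have hscope : ∀ s ∈ powersetCard k (univ : Finset (Fin n)),
      (d ^ k - #(A.image s.restrict)).choose q = #(powersetCard q (A.image s.restrict)ᶜ) := by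
    intro s hs
    simp [card_powersetCard, card_compl, (mem_powersetCard.1 hs).2]
  rw [sum_congr rfl hscope, ← card_sigma]
  have hmem (s : Finset (Fin n)) (F : Finset (s → Fin d)) :
      (∀ a ∈ A, satisfies a ⟨s, F⟩) ↔ F ⊆ (A.image s.restrict)ᶜ := by
    rw [subset_compl_comm, image_subset_iff]
    simp only [mem_compl]
    rfl
  refine card_nbij Subtype.val ?_ Subtype.val_injective.injOn ?_
  · rintro ⟨⟨s, F⟩, hs, hF⟩ hc
    simp only [mem_coe, mem_filter_univ, hmem] at hc
    simpa [mem_powersetCard] using ⟨hs, hc, hF⟩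
  · rintro ⟨s, F⟩ hsF
    simp only [coe_sigma, Set.mem_sigma_iff, mem_coe, mem_powersetCard] at hsF
    exact ⟨⟨⟨s, F⟩, hsF.1.2, hsF.2.2⟩, by simpa [hmem] using hsF.2.1, rfl⟩

lemma card_validConstraint (k n d q : ℕ) :
    Fintype.card (ValidConstraint k n d q) = n.choose k * (d ^ k).choose q := by
  simpa using card_filter_forall_satisfies (n := n) (d := d) k q ∅

lemma satProb_eq_expect (k q : ℕ) (A : Finset (Fin n → Fin d)) :
    satProb k q A = 𝔼 s ∈ powersetCard k univ,
      ((d ^ k - #(A.image s.restrict)).choose q / (d ^ k).choose q : ℝ) := by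
  rw [satProb, card_filter_forall_satisfies, card_validConstraint, expect_eq_sum_div_card,
    card_powersetCard, card_univ, Fintype.card_fin, ← sum_div, div_div]
  push_cast
  rw [mul_comm]

open scoped Classical in
lemma card_filter_satInstance_div_card (k q m : ℕ) (A : Finset (Fin n → Fin d)) :
    (#{P : Instance k n d q m | ∀ a ∈ A, satInstance a P} / Fintype.card (Instance k n d q m) : ℝ) =
      satProb k q A ^ m := by
  have hpi : ({P : Instance k n d q m | ∀ a ∈ A, satInstance a P} : Finset _) =
      Fintype.piFinset fun _ => {c : ValidConstraint k n d q | ∀ a ∈ A, satisfies a c.1} := by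
    ext P
    rw [mem_filter_univ, Fintype.mem_piFinset]
    simp only [mem_filter_univ]
    exact ⟨fun h i a ha => h a ha i, fun h a ha i => h i a ha⟩
  rw [hpi, Fintype.card_piFinset_const, Fintype.card_fun, Fintype.card_fin, satProb, div_pow]
  push_cast
  rfl

lemma expN_eq_sum (k n d q m : ℕ) :
    expN k n d q m = ∑ a : Fin n → Fin d, satProb k q {a} ^ m := by
  classical
  simp_rw [expN, numSolutions, ← sum_boole (R := ℝ), ← card_filter_satInstance_div_card,
    mem_singleton, forall_eq, ← sum_div, ← sum_boole (R := ℝ)]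
  rw [sum_comm]

lemma expNsq_eq_sum (k n d q m : ℕ) :
    expNsq k n d q m =
      ∑ a : Fin n → Fin d, ∑ b : Fin n → Fin d, satProb k q {a, b} ^ m := by
  classical
  simp_rw [expNsq, numSolutions, ← sum_boole (R := ℝ), sq, sum_mul_sum, ite_zero_mul_ite_zero,
    one_mul, ← card_filter_satInstance_div_card, forall_mem_insert, mem_singleton, forall_eq,
    ← sum_div, ← sum_boole (R := ℝ)]
  rw [sum_comm]
  exact congrArg (· / _) (sum_congr rfl fun a _ => sum_comm)

/-- The set of variables to which two assignments give the same value; its size is their overlap. -/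
def agreement (a b : Fin n → Fin d) : Finset (Fin n) := {i | a i = b i}

lemma restrict_eq_restrict_iff {a b : Fin n → Fin d} {s : Finset (Fin n)} :
    s.restrict a = s.restrict b ↔ s ⊆ agreement a b := by
  simp [funext_iff, agreement, subset_iff]

lemma satProb_singleton {k q : ℕ} (hk : k ≤ n) (hq : q ≤ d ^ k) (a : Fin n → Fin d) :
    satProb k q {a} = 1 - q / d ^ k := by
  have hchoose : ((d ^ k).choose q : ℝ) ≠ 0 := by exact_mod_cast (Nat.choose_pos hq).ne'
  have hscopes : (powersetCard k (univ : Finset (Fin n))).Nonempty := by simpa using hk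
  simp only [satProb_eq_expect, image_singleton, card_singleton, cast_choose_pred hq,
    mul_div_cancel_right₀ _ hchoose, expect_const hscopes, Nat.cast_pow]

lemma satProb_pair_le {k q : ℕ} (hk : k ≤ n) (hq : q ≤ d ^ k) (a b : Fin n → Fin d) :
    satProb k q {a, b} ≤ (1 - q / d ^ k) ^ 2 +
      (#(agreement a b) / n) ^ k * ((1 - q / d ^ k) - (1 - q / d ^ k) ^ 2) := by
  set u : ℝ := 1 - q / d ^ k with hu
  have hq' : (q : ℝ) ≤ (d : ℝ) ^ k := by exact_mod_cast hq
  have hu0 : 0 ≤ u := sub_nonneg.2 (div_le_one_of_le₀ hq' (by positivity))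
  have hu1 : u ≤ 1 := sub_le_self _ (by positivity)
  have hchoose : (0 : ℝ) < (d ^ k).choose q := by exact_mod_cast Nat.choose_pos hq
  have hscopes : (powersetCard k (univ : Finset (Fin n))).Nonempty := by simpa using hk
  have hscope (s : Finset (Fin n)) :
      ((d ^ k - #(({a, b} : Finset _).image s.restrict)).choose q / (d ^ k).choose q : ℝ) ≤
        u ^ 2 + if s ⊆ agreement a b then u - u ^ 2 else 0 := by
    rw [image_insert, image_singleton, div_le_iff₀ hchoose]
    split_ifs with hs
    · rw [restrict_eq_restrict_iff.2 hs, pair_eq_singleton, card_singleton, cast_choose_pred hq,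
        Nat.cast_pow, ← hu, add_sub_cancel]
    · rw [card_pair (mt restrict_eq_restrict_iff.1 hs), add_zero]
      simpa using cast_choose_sub_two_le hq
  have hsubset : ({s ∈ powersetCard k univ | s ⊆ agreement a b} : Finset _) =
      powersetCard k (agreement a b) := by
    ext s
    simp [mem_powersetCard, and_comm]
  calc satProb k q {a, b}
      ≤ 𝔼 s ∈ powersetCard k univ, (u ^ 2 + if s ⊆ agreement a b then u - u ^ 2 else 0) := by
        rw [satProb_eq_expect]
        exact expect_le_expect fun s _ => hscope s
    _ = u ^ 2 + (#(agreement a b)).choose k / n.choose k * (u - u ^ 2) := by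
        rw [expect_add_distrib, expect_const hscopes, expect_eq_sum_div_card, ← sum_filter, hsubset,
          sum_const, nsmul_eq_mul, card_powersetCard, card_powersetCard, card_univ,
          Fintype.card_fin, mul_div_right_comm]
    _ ≤ u ^ 2 + (#(agreement a b) / n) ^ k * (u - u ^ 2) := by
        gcongr
        · exact sub_nonneg.2 (pow_le_of_le_one hu0 hu1 two_ne_zero)
        · exact choose_div_choose_le_div_pow (by simpa using card_le_univ (agreement a b)) k

lemma sq_expN_le_expNsq (k n d q m : ℕ) : expN k n d q m ^ 2 ≤ expNsq k n d q m := by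
  simpa only [expN, expNsq, card_univ] using
    sum_div_card_sq_le_sum_sq_div_card (s := univ)
      (f := fun P : Instance k n d q m => (numSolutions P : ℝ))

lemma expN_eq {k q : ℕ} (hk : k ≤ n) (hq : q ≤ d ^ k) (m : ℕ) :
    expN k n d q m = d ^ n * (1 - q / d ^ k) ^ m := by
  simp [expN_eq_sum, satProb_singleton hk hq]

lemma one_sub_div_pow_pos {k q : ℕ} (hq : q < d ^ k) : (0 : ℝ) < 1 - q / d ^ k :=
  sub_pos.2 ((div_lt_one (by exact_mod_cast hq.pos)).2 (by exact_mod_cast hq))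

lemma expN_pos {k q : ℕ} (hd : 0 < d) (hk : k ≤ n) (hq : q < d ^ k) (m : ℕ) :
    0 < expN k n d q m := by
  have := one_sub_div_pow_pos hq
  rw [expN_eq hk hq.le]
  positivity

/-- The mean of `f S`, where `S` is the overlap of two independent uniformly random assignments
of values from `Fin d` to `n` variables. -/
noncomputable def overlapMean (n d : ℕ) (f : ℕ → ℝ) : ℝ :=
  𝔼 a : Fin n → Fin d, 𝔼 b : Fin n → Fin d, f #(agreement a b)

lemma expNsq_div_sq_expN_le {k q : ℕ} (hk : k ≤ n) (hq : q < d ^ k) (m : ℕ) {κ : ℝ}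
    (hκ : (1 - q / d ^ k : ℝ)⁻¹ ≤ 1 + κ) :
    expNsq k n d q m / expN k n d q m ^ 2 ≤
      overlapMean n d fun s => (1 + (s / n : ℝ) ^ k * κ) ^ m := by
  have hu : (0 : ℝ) < 1 - q / d ^ k := one_sub_div_pow_pos hq
  set u : ℝ := 1 - q / d ^ k
  have hpair (a b : Fin n → Fin d) :
      satProb k q {a, b} / u ^ 2 ≤ 1 + (#(agreement a b) / n : ℝ) ^ k * κ := by
    calc satProb k q {a, b} / u ^ 2
        ≤ (u ^ 2 + (#(agreement a b) / n) ^ k * (u - u ^ 2)) / u ^ 2 := by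
          gcongr
          exact satProb_pair_le hk hq.le a b
      _ = 1 + (#(agreement a b) / n) ^ k * (u⁻¹ - 1) := by field_simp
      _ ≤ 1 + (#(agreement a b) / n : ℝ) ^ k * κ := by gcongr; linarith
  have hnonneg (a b : Fin n → Fin d) : 0 ≤ satProb k q {a, b} := by unfold satProb; positivity
  have hexpN : expN k n d q m ^ 2 = (d ^ n) ^ 2 * (u ^ 2) ^ m := by
    rw [show expN k n d q m = d ^ n * u ^ m from expN_eq hk hq.le m, mul_pow, pow_right_comm u]
  calc expNsq k n d q m / expN k n d q m ^ 2
      = 𝔼 a : Fin n → Fin d, 𝔼 b : Fin n → Fin d, (satProb k q {a, b} / u ^ 2) ^ m := by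
        simp only [Fintype.expect_eq_sum_div_card, ← sum_div, div_pow, hexpN, expNsq_eq_sum]
        simp only [Fintype.card_fun, Fintype.card_fin]
        push_cast
        field_simp
    _ ≤ overlapMean n d fun s => (1 + (s / n : ℝ) ^ k * κ) ^ m := by
        refine expect_le_expect fun a _ => expect_le_expect fun b _ => ?_
        have := hnonneg a b
        exact pow_le_pow_left₀ (by positivity) (hpair a b) m

/-! ### Distribution of the overlap -/

lemma card_filter_subset_agreement (a : Fin n → Fin d) (S : Finset (Fin n)) :
    #{b : Fin n → Fin d | S ⊆ agreement a b} = d ^ (n - #S) := by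
  have hpi : ({b | S ⊆ agreement a b} : Finset (Fin n → Fin d)) =
      Fintype.piFinset fun i => if i ∈ S then {a i} else univ := by
    ext b
    simp only [mem_filter_univ, Fintype.mem_piFinset, subset_iff, agreement]
    refine forall_congr' fun i => ?_
    split_ifs with hi <;> simp [hi, eq_comm]
  simp only [hpi, Fintype.card_piFinset, apply_ite card, card_singleton, card_univ,
    Fintype.card_fin, prod_ite, prod_const, one_pow, one_mul, filter_not, filter_mem_eq_inter,
    univ_inter, card_sdiff_of_subset (subset_univ S)]

lemma card_filter_card_agreement_eq_le (a : Fin n → Fin d) (s : ℕ) :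
    #{b : Fin n → Fin d | #(agreement a b) = s} ≤ n.choose s * d ^ (n - s) := by
  calc #{b : Fin n → Fin d | #(agreement a b) = s}
      ≤ #((powersetCard s univ).biUnion fun S => {b | S ⊆ agreement a b}) := by
        refine card_le_card fun b hb => ?_
        simp only [mem_biUnion, mem_filter_univ] at hb ⊢
        exact ⟨agreement a b, mem_powersetCard.2 ⟨subset_univ _, hb⟩, subset_rfl⟩
    _ ≤ ∑ S ∈ powersetCard s univ, #{b | S ⊆ agreement a b} := card_biUnion_le
    _ = ∑ _S ∈ powersetCard s (univ : Finset (Fin n)), d ^ (n - s) :=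
        sum_congr rfl fun S hS => by
          rw [card_filter_subset_agreement, (mem_powersetCard.1 hS).2]
    _ = n.choose s * d ^ (n - s) := by simp

lemma expect_card_agreement_le (hd : 0 < d) {g : ℕ → ℝ} (hg : 0 ≤ g) (a : Fin n → Fin d) :
    𝔼 b : Fin n → Fin d, g #(agreement a b) ≤
      ∑ s ∈ range (n + 1), n.choose s / (d : ℝ) ^ s * g s := by
  have hmaps (b : Fin n → Fin d) : #(agreement a b) ∈ range (n + 1) := by
    simpa [Nat.lt_succ_iff] using card_le_univ (agreement a b)
  rw [Fintype.expect_eq_sum_div_card, div_le_iff₀ (by simpa using pow_pos (Nat.cast_pos.2 hd) n),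
    sum_mul, ← sum_fiberwise_of_maps_to' (fun b _ => hmaps b)]
  refine sum_le_sum fun s hs => ?_
  have hsn : s ≤ n := Nat.le_of_lt_succ (mem_range.1 hs)
  calc ∑ b with #(agreement a b) = s, g s
      = (#{b : Fin n → Fin d | #(agreement a b) = s} : ℝ) * g s := by rw [sum_const, nsmul_eq_mul]
    _ ≤ (n.choose s * d ^ (n - s) : ℕ) * g s := by
        gcongr
        · exact hg s
        · exact card_filter_card_agreement_eq_le a s
    _ = n.choose s / (d : ℝ) ^ s * g s * Fintype.card (Fin n → Fin d) := by
        rw [Fintype.card_fun, Fintype.card_fin, Fintype.card_fin, ← pow_sub_mul_pow d hsn]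
        push_cast
        field_simp

lemma overlapMean_const (hd : 0 < d) (x : ℝ) : overlapMean n d (fun _ => x) = x := by
  have : NeZero d := ⟨hd.ne'⟩
  simp [overlapMean]

lemma overlapMean_mono {f g : ℕ → ℝ} (h : ∀ s ≤ n, f s ≤ g s) :
    overlapMean n d f ≤ overlapMean n d g :=
  expect_le_expect fun a _ => expect_le_expect fun b _ =>
    h _ (by simpa using card_le_univ (agreement a b))

lemma le_overlapMean (hd : 0 < d) {f : ℕ → ℝ} {x : ℝ} (h : ∀ s ≤ n, x ≤ f s) :
    x ≤ overlapMean n d f :=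
  (overlapMean_const hd x).symm.trans_le (overlapMean_mono h)

lemma overlapMean_add (f g : ℕ → ℝ) :
    overlapMean n d (fun s => f s + g s) = overlapMean n d f + overlapMean n d g := by
  simp [overlapMean, expect_add_distrib]

lemma overlapMean_le_sum (hd : 0 < d) {g : ℕ → ℝ} (hg : 0 ≤ g) :
    overlapMean n d g ≤ ∑ s ∈ range (n + 1), n.choose s / (d : ℝ) ^ s * g s := by
  have : NeZero d := ⟨hd.ne'⟩
  exact expect_le univ_nonempty fun a _ => expect_card_agreement_le hd hg a

lemma overlapMean_le_add_geom (hd : 0 < d) {f : ℕ → ℝ} {M ρ : ℝ} (hM : 0 ≤ M) (hρ0 : 0 ≤ ρ)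
    (hρ1 : ρ < 1) (hf : ∀ s ≤ n, f s ≤ M ∨ 1 ≤ s ∧ n.choose s / (d : ℝ) ^ s * f s ≤ ρ ^ s) :
    overlapMean n d f ≤ M + ρ / (1 - ρ) := by
  let excess (s : ℕ) : ℝ := max (f s - M) 0
  have hexcess : 0 ≤ excess := fun s => le_max_right _ _
  have hzero (s : ℕ) (hs : f s ≤ M) : excess s = 0 := max_eq_right (sub_nonpos.2 hs)
  have hle (s : ℕ) (hs : s + 1 ≤ n) :
      n.choose (s + 1) / (d : ℝ) ^ (s + 1) * excess (s + 1) ≤ ρ ^ (s + 1) := by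
    by_cases hsM : f (s + 1) ≤ M
    · rw [hzero _ hsM, mul_zero]
      positivity
    · refine le_trans ?_ ((hf _ hs).resolve_left hsM).2
      gcongr
      exact max_le (by linarith) (hM.trans (le_of_not_ge hsM))
  have hzero0 : excess 0 = 0 :=
    hzero 0 ((hf 0 n.zero_le).resolve_right (by simp))
  calc overlapMean n d f ≤ overlapMean n d (fun s => M + excess s) :=
        overlapMean_mono fun s _ => by linarith [le_max_left (f s - M) 0]
    _ = M + overlapMean n d excess := by rw [overlapMean_add, overlapMean_const hd]
    _ ≤ M + ∑ s ∈ range n, ρ * ρ ^ s := by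
        gcongr
        refine (overlapMean_le_sum hd hexcess).trans ?_
        rw [sum_range_succ', hzero0, mul_zero, add_zero]
        exact sum_le_sum fun s hs => by
          rw [← pow_succ']
          exact hle s (mem_range.1 hs)
    _ ≤ M + ρ / (1 - ρ) := by
        rw [← mul_sum, div_eq_mul_inv, ← tsum_geometric_of_lt_one hρ0 hρ1]
        gcongr
        exact (summable_geometric_of_lt_one hρ0 hρ1).sum_le_tsum _ fun s _ => by positivity

/-! ### Asymptotics -/

lemma choose_div_pow_mul_exp_pow_le {n s d m : ℕ} {α r h y : ℝ} (hs : 1 ≤ s) (hsn : s ≤ n)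
    (hh : 0 ≤ h) (hy : 0 < y) (hys : y ≤ s / n) (hd : (n : ℝ) ^ α ≤ d)
    (hm : (m : ℝ) ≤ r * n * log n + 1) :
    n.choose s / (d : ℝ) ^ s * exp (s / n * h) ^ m ≤
      (exp (1 + h) / y * (n : ℝ) ^ (r * h - α)) ^ s := by
  have hn : (1 : ℝ) ≤ n := by exact_mod_cast hs.trans hsn
  have hn0 : (0 : ℝ) < n := zero_lt_one.trans_le hn
  have : (0 : ℝ) < s := by exact_mod_cast hs
  have hchoose : (n.choose s : ℝ) ≤ (exp 1 / y) ^ s := by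
    refine (choose_le_exp_one_mul_div_pow n s).trans ?_
    rw [mul_div_assoc, div_eq_mul_inv _ y, ← inv_div (s : ℝ)]
    gcongr
  have hexp : exp (s / n * h) ^ m ≤ (exp h * (n : ℝ) ^ (r * h)) ^ s := by
    have hmn : m / n * h ≤ h + log n * (r * h) := by
      have : (m : ℝ) / n ≤ 1 + r * log n := by
        rw [div_le_iff₀ hn0]
        linarith
      calc m / n * h ≤ (1 + r * log n) * h := by gcongr
        _ = h + log n * (r * h) := by ring
    rw [rpow_def_of_pos hn0, ← exp_add, ← exp_nat_mul, ← exp_nat_mul, exp_le_exp]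
    calc m * (s / n * h) = s * (m / n * h) := by ring
      _ ≤ s * (h + log n * (r * h)) := by gcongr
  calc n.choose s / (d : ℝ) ^ s * exp (s / n * h) ^ m
      ≤ (exp 1 / y) ^ s / ((n : ℝ) ^ α) ^ s * (exp h * (n : ℝ) ^ (r * h)) ^ s := by gcongr
    _ = (exp (1 + h) / y * (n : ℝ) ^ (r * h - α)) ^ s := by
        rw [← div_pow, ← mul_pow, exp_add, rpow_sub hn0]
        ring

lemma overlapMean_one_add_pow_le {n d m k : ℕ} {α r κ h δ ε ρ : ℝ} (hn : 1 ≤ n) (hk : k ≠ 0)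
    (hκ : 0 ≤ κ) (hκh : ∀ x ∈ Set.Icc (0 : ℝ) 1, 1 + x ^ k * κ ≤ exp (x * h))
    (hd : (n : ℝ) ^ α ≤ d) (hm : (m : ℝ) ≤ r * n * log n + 1) (hδ : 0 < δ) (hε : 0 < ε)
    (hρmid : exp (1 + ε ^ (k - 1) * κ) / δ * (n : ℝ) ^ (r * (ε ^ (k - 1) * κ) - α) ≤ ρ)
    (hρtop : exp (1 + h) / ε * (n : ℝ) ^ (r * h - α) ≤ ρ) (hρ : ρ < 1) :
    overlapMean n d (fun s => (1 + (s / n : ℝ) ^ k * κ) ^ m) ≤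
      exp (m * (δ ^ k * κ)) + ρ / (1 - ρ) := by
  have hn0 : (0 : ℝ) < n := by exact_mod_cast hn
  have hd0 : 0 < d := by exact_mod_cast (rpow_pos_of_pos hn0 α).trans_le hd
  have hh : 0 ≤ h := by
    have := hκh 1 (by simp)
    rw [one_pow, one_mul, one_mul] at this
    exact one_le_exp_iff.1 (by linarith)
  refine overlapMean_le_add_geom hd0 (by positivity) (le_trans (by positivity) hρtop) hρ
    fun s hs => ?_
  rcases le_or_gt (s / n : ℝ) δ with hsδ | hδs
  · left
    rw [exp_nat_mul]
    gcongr
    calc 1 + (s / n : ℝ) ^ k * κ ≤ δ ^ k * κ + 1 := by rw [add_comm]; gcongr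
      _ ≤ exp (δ ^ k * κ) := add_one_le_exp _
  right
  have hs1 : 1 ≤ s := by
    rw [Nat.one_le_iff_ne_zero]
    rintro rfl
    simp [hδ.not_gt] at hδs
  refine ⟨hs1, ?_⟩
  rcases le_or_gt (s / n : ℝ) ε with hsε | hεs
  · have hle : 1 + (s / n : ℝ) ^ k * κ ≤ exp (s / n * (ε ^ (k - 1) * κ)) :=
      one_add_pow_mul_le_exp_mul_pow_pred hk hκ (by positivity) hsε
    calc n.choose s / (d : ℝ) ^ s * (1 + (s / n : ℝ) ^ k * κ) ^ m
        ≤ n.choose s / (d : ℝ) ^ s * exp (s / n * (ε ^ (k - 1) * κ)) ^ m := by gcongr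
      _ ≤ _ := choose_div_pow_mul_exp_pow_le hs1 hs (by positivity) hδ hδs.le hd hm
      _ ≤ ρ ^ s := by gcongr
  · have hle : 1 + (s / n : ℝ) ^ k * κ ≤ exp (s / n * h) :=
      hκh _ ⟨by positivity, div_le_one_of_le₀ (by exact_mod_cast hs) hn0.le⟩
    calc n.choose s / (d : ℝ) ^ s * (1 + (s / n : ℝ) ^ k * κ) ^ m
        ≤ n.choose s / (d : ℝ) ^ s * exp (s / n * h) ^ m := by gcongr
      _ ≤ _ := choose_div_pow_mul_exp_pow_le hs1 hs hh hε hεs.le hd hm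
      _ ≤ ρ ^ s := by gcongr

lemma tendsto_natCast_rpow_atTop_zero {γ : ℝ} (hγ : γ < 0) :
    Tendsto (fun n : ℕ => (n : ℝ) ^ γ) atTop (𝓝 0) := by
  simpa only [neg_neg, Function.comp_def] using
    (tendsto_rpow_neg_atTop (neg_pos.2 hγ)).comp tendsto_natCast_atTop_atTop

lemma tendsto_div_rpow_mul_rpow_zero {β γ : ℝ} (hγβ : γ < β) (C : ℝ) :
    Tendsto (fun n : ℕ => C / (n : ℝ) ^ β * (n : ℝ) ^ γ) atTop (𝓝 0) := by
  have hlim := (tendsto_natCast_rpow_atTop_zero (sub_neg.2 hγβ)).const_mul C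
  rw [mul_zero] at hlim
  refine hlim.congr' ?_
  filter_upwards [eventually_gt_atTop 0] with n hn
  rw [rpow_sub (by exact_mod_cast hn), div_mul_eq_mul_div, mul_div_assoc]

lemma tendsto_mul_rpow_zero {m : ℕ → ℕ} {r γ : ℝ} (hm : ∀ n : ℕ, (m n : ℝ) ≤ r * n * log n + 1)
    (hγ : γ < -1) : Tendsto (fun n : ℕ => (m n : ℝ) * (n : ℝ) ^ γ) atTop (𝓝 0) := by
  have hlog : Tendsto (fun n : ℕ => log n / (n : ℝ) ^ (-(γ + 1))) atTop (𝓝 0) :=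
    (isLittleO_log_rpow_atTop (by linarith)).tendsto_div_nhds_zero.comp
      tendsto_natCast_atTop_atTop
  have hpow := tendsto_natCast_rpow_atTop_zero (show γ < 0 by linarith)
  have hlim := (hlog.const_mul r).add hpow
  rw [mul_zero, add_zero] at hlim
  refine squeeze_zero' (Eventually.of_forall fun n => by positivity) ?_ hlim
  filter_upwards [eventually_gt_atTop 0] with n hn
  have hn0 : (0 : ℝ) < n := by exact_mod_cast hn
  calc (m n : ℝ) * (n : ℝ) ^ γ ≤ (r * n * log n + 1) * (n : ℝ) ^ γ := by
        gcongr
        exact hm n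
    _ = r * (log n / (n : ℝ) ^ (-(γ + 1))) + (n : ℝ) ^ γ := by
        rw [rpow_neg hn0.le, div_inv_eq_mul, rpow_add_one hn0.ne']
        ring

lemma exists_pos_mul_pow_lt {j : ℕ} (hj : j ≠ 0) (c : ℝ) {b : ℝ} (hb : 0 < b) :
    ∃ ε : ℝ, 0 < ε ∧ c * ε ^ j < b := by
  have hlim : Tendsto (fun ε : ℝ => c * ε ^ j) (𝓝[>] 0) (𝓝 0) := by
    have : Continuous fun ε : ℝ => c * ε ^ j := by fun_prop
    simpa [hj] using (this.tendsto 0).mono_left nhdsWithin_le_nhds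
  exact (eventually_mem_nhdsWithin.and (hlim.eventually_lt_const hb)).exists

lemma tendsto_overlapMean_one_add_pow {k : ℕ} {α r κ h : ℝ} {d m : ℕ → ℕ} (hk : 2 ≤ k)
    (hα : 1 / (k : ℝ) < α) (hκ : 0 ≤ κ)
    (hκh : ∀ x ∈ Set.Icc (0 : ℝ) 1, 1 + x ^ k * κ ≤ exp (x * h)) (hrh : r * h < α)
    (hd : ∀ n : ℕ, (n : ℝ) ^ α ≤ d n) (hm : ∀ n : ℕ, (m n : ℝ) ≤ r * n * log n + 1) :
    Tendsto (fun n => overlapMean n (d n) fun s => (1 + (s / n : ℝ) ^ k * κ) ^ m n)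
      atTop (𝓝 1) := by
  obtain ⟨β, hkβ, hβα⟩ := exists_between hα
  obtain ⟨ε, hε, hrε⟩ := exists_pos_mul_pow_lt (show k - 1 ≠ 0 by omega) (r * κ) (sub_pos.2 hβα)
  have hβk : 1 < β * k := (div_lt_iff₀ (by positivity)).1 hkβ
  let ρmid (n : ℕ) : ℝ :=
    exp (1 + ε ^ (k - 1) * κ) / (n : ℝ) ^ (-β) * (n : ℝ) ^ (r * (ε ^ (k - 1) * κ) - α)
  let ρtop (n : ℕ) : ℝ := exp (1 + h) / ε * (n : ℝ) ^ (r * h - α)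
  let ρ (n : ℕ) : ℝ := max (ρmid n) (ρtop n)
  have hρmid : Tendsto ρmid atTop (𝓝 0) := tendsto_div_rpow_mul_rpow_zero (by linarith) _
  have hρtop : Tendsto ρtop atTop (𝓝 0) := by
    simpa using (tendsto_natCast_rpow_atTop_zero (sub_neg.2 hrh)).const_mul (exp (1 + h) / ε)
  have hρ : Tendsto ρ atTop (𝓝 0) := by simpa only [max_self] using hρmid.max hρtop
  have hbulk : Tendsto (fun n : ℕ => exp (m n * (((n : ℝ) ^ (-β)) ^ k * κ))) atTop (𝓝 1) := by
    have hlim := (tendsto_mul_rpow_zero hm (show -(β * k) < -1 by linarith)).mul_const κ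
    rw [zero_mul] at hlim
    rw [← exp_zero]
    refine (continuous_exp.tendsto 0).comp (hlim.congr fun n => ?_)
    rw [← rpow_mul_natCast n.cast_nonneg, neg_mul, mul_assoc]
  have hupper : Tendsto (fun n : ℕ => exp (m n * (((n : ℝ) ^ (-β)) ^ k * κ)) + ρ n / (1 - ρ n))
      atTop (𝓝 1) := by
    have hgeom := hρ.div (hρ.const_sub 1) (by simp)
    simpa using hbulk.add hgeom
  refine tendsto_of_tendsto_of_tendsto_of_le_of_le' tendsto_const_nhds hupper ?_ ?_
  · filter_upwards [eventually_gt_atTop 0] with n hn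
    have hn0 : (0 : ℝ) < n := by exact_mod_cast hn
    have hd0 : 0 < d n := by exact_mod_cast (rpow_pos_of_pos hn0 α).trans_le (hd n)
    exact le_overlapMean hd0 fun s _ => one_le_pow₀ (le_add_of_nonneg_right (by positivity))
  · filter_upwards [eventually_gt_atTop 0, hρ.eventually_lt_const (zero_lt_one' ℝ)] with n hn hρn
    exact overlapMean_one_add_pow_le hn (by omega) hκ hκh (hd n) (hm n)
      (rpow_pos_of_pos (by exact_mod_cast hn) _) hε (le_max_left _ _) (le_max_right _ _) hρn

lemma tendsto_dOf_atTop {α : ℝ} (hα : 0 < α) : Tendsto (dOf α) atTop atTop :=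
  tendsto_nat_ceil_atTop.comp ((tendsto_rpow_atTop hα).comp tendsto_natCast_atTop_atTop)

lemma tendsto_qOf_div_pow {k : ℕ} {p : ℝ} (hk : k ≠ 0) (hp : 0 ≤ p) :
    Tendsto (fun d : ℕ => (qOf p k d : ℝ) / (d : ℝ) ^ k) atTop (𝓝 p) :=
  (tendsto_nat_ceil_mul_div_atTop hp).comp
    ((tendsto_pow_atTop hk).comp tendsto_natCast_atTop_atTop)

lemma eventually_qOf_lt_pow {k : ℕ} {p : ℝ} (hk : k ≠ 0) (hp0 : 0 ≤ p) (hp1 : p < 1) :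
    ∀ᶠ d : ℕ in atTop, qOf p k d < d ^ k := by
  filter_upwards [(tendsto_qOf_div_pow hk hp0).eventually_lt_const hp1, eventually_gt_atTop 0]
    with d hlt hd
  exact_mod_cast (div_lt_one (by positivity)).1 hlt

lemma eventually_inv_one_sub_qOf_div_pow_le {k : ℕ} {p y : ℝ} (hk : k ≠ 0) (hp0 : 0 ≤ p)
    (hp1 : p < 1) (hy : (1 - p)⁻¹ < y) :
    ∀ᶠ d : ℕ in atTop, (1 - qOf p k d / (d : ℝ) ^ k)⁻¹ ≤ y := by
  have hlim := ((tendsto_qOf_div_pow hk hp0).const_sub 1).inv₀ (sub_pos.2 hp1).ne'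
  exact (hlim.eventually_lt_const hy).mono fun d hd => hd.le

lemma div_one_sub_le_sub_one {k p : ℝ} (hk : 0 < k) (hp : p ≤ (k - 1) / k) :
    p / (1 - p) ≤ k - 1 := by
  rw [le_div_iff₀ hk] at hp
  have hp1 : 0 < 1 - p := by nlinarith
  rw [div_le_iff₀ hp1]
  linarith

lemma log_one_add_div_one_sub_lt {α r p : ℝ} (hr : 0 < r) (hp0 : 0 < p) (hp1 : p < 1)
    (hrcr : r < -α / log (1 - p)) : log (1 + p / (1 - p)) < α / r := by
  have hlog : log (1 - p) < 0 := log_neg (by linarith) (by linarith)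
  rw [one_add_div (sub_pos.2 hp1).ne', sub_add_cancel, one_div, log_inv,
    lt_div_comm₀ (neg_pos.2 hlog) hr]
  rwa [div_neg, ← neg_div]

lemma mOf_le {r : ℝ} (hr : 0 ≤ r) (n : ℕ) : (mOf r n : ℝ) ≤ r * n * log n + 1 :=
  (Nat.ceil_lt_add_one (by positivity)).le

end RB

/-- **Second moment method for model RB below the threshold**: for an integer `k ≥ 2` and
real constants `α > 1/k`, `r > 0`, `0 < p ≤ (k-1)/k` with `r < r_cr = -α / ln (1-p)`,
the ratio `E[N²]/E[N]²` of the moments of the number `N` of satisfying assignments of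
a random `RB(k,n,α,r,p)` instance tends to `1` as `n → ∞`. -/
theorem rb_second_moment_ratio (k : ℕ) (hk : 2 ≤ k) (α r p : ℝ)
    (hα : 1 / (k : ℝ) < α) (hr : 0 < r) (hp0 : 0 < p) (hp1 : p ≤ ((k : ℝ) - 1) / k)
    (hrcr : r < -α / Real.log (1 - p)) :
    Tendsto
      (fun n : ℕ =>
        RB.expNsq k n (RB.dOf α n) (RB.qOf p k (RB.dOf α n)) (RB.mOf r n) /
          (RB.expN k n (RB.dOf α n) (RB.qOf p k (RB.dOf α n)) (RB.mOf r n)) ^ 2)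
      atTop (𝓝 1) := by
  have hk0 : k ≠ 0 := by omega
  have hp : p < 1 := hp1.trans_lt ((div_lt_one (by positivity)).2 (sub_one_lt _))
  set c := p / (1 - p) with hc_def
  have hc : 0 ≤ c := div_nonneg hp0.le (sub_pos.2 hp).le
  have hck : c ≤ k - 1 := RB.div_one_sub_le_sub_one (by positivity) hp1
  have hinv : (1 - p)⁻¹ = 1 + c := by
    rw [hc_def, one_add_div (sub_pos.2 hp).ne', sub_add_cancel, one_div]
  obtain ⟨h, hch, hhr⟩ := exists_between (RB.log_one_add_div_one_sub_lt hr hp0 hp hrcr)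
  have hupper := RB.tendsto_overlapMean_one_add_pow hk hα (by linarith)
    (fun x hx => RB.one_add_pow_mul_add_le_exp hc hck (sub_pos.2 hch).le hx.1 hx.2)
    (by linarith [(lt_div_iff₀' hr).1 hhr]) (fun n => Nat.le_ceil _) (RB.mOf_le hr.le)
  have hdom := RB.tendsto_dOf_atTop (lt_trans (by positivity) hα)
  have hq := hdom.eventually (RB.eventually_qOf_lt_pow hk0 hp0.le hp)
  have hκ := hdom.eventually (RB.eventually_inv_one_sub_qOf_div_pow_le hk0 hp0.le hp
    (y := 1 + (c + (h - Real.log (1 + c)))) (by linarith))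
  refine tendsto_of_tendsto_of_tendsto_of_le_of_le' tendsto_const_nhds hupper ?_ ?_
  · filter_upwards [hdom.eventually_gt_atTop 0, hq, eventually_ge_atTop k] with n hd hqn hkn
    have hN := RB.expN_pos hd hkn hqn (RB.mOf r n)
    exact (one_le_div (by positivity)).2 (RB.sq_expN_le_expNsq ..)
  · filter_upwards [hq, hκ, eventually_ge_atTop k] with n hqn hκn hkn
    exact RB.expNsq_div_sq_expN_le hkn hqn _ hκn
end

section
/- Let H(δ) = -δ·ln δ - (1-δ)·ln(1-δ) for δ ∈ (0,1) denote the natural-logarithm binary entropy, extended by H(0) = H(1) = 0. Define f : [0,1] → ℝ by f(δ) = H(δ) + 4.25·ln((6 + (1-δ)³)/7). Then every point at which f attains its maximum over [0,1] lies in the open interval (0.23, 0.25); in particular, the maximizer of f is strictly less than 1/2, whereas the function g(δ) = H(δ) + 4.25·ln(7/8) attains its maximum over [0,1] exactly at δ = 1/2. -/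
/-- The natural-logarithm binary entropy `H(δ) = -δ·ln δ - (1-δ)·ln(1-δ)`
(since `Real.log 0 = 0`, this automatically extends by `H(0) = H(1) = 0`). -/
noncomputable def H (δ : ℝ) : ℝ := -δ * Real.log δ - (1 - δ) * Real.log (1 - δ)

/-- `f(δ) = H(δ) + 4.25·ln((6 + (1-δ)³)/7)`: the exponential growth rate of the expected
number of solutions at relative Hamming distance `δ` from the forced solution in forced
random 3-SAT at clause-to-variable ratio `4.25`. -/
noncomputable def f (δ : ℝ) : ℝ := H δ + 4.25 * Real.log ((6 + (1 - δ) ^ 3) / 7)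

/-- `g(δ) = H(δ) + 4.25·ln(7/8)`: the corresponding growth rate for unforced instances
relative to an arbitrary fixed assignment. -/
noncomputable def g (δ : ℝ) : ℝ := H δ + 4.25 * Real.log (7 / 8)

/-! At clause density `4.25` the growth rate of forced instances is concave on `[0, 1]`: the entropy
contributes `-1 / (δ (1 - δ))` to its second derivative, and by the AM-GM bound `t² (1 - t) ≤ 4/27`
with `t = 1 - δ` this outweighs the contribution of the clauses. A maximizer of a concave function
lies on the side of a point to which the derivative there points, so it remains to see that the
derivative is positive at `0.23` and negative at `0.25`. The unforced growth rate is the binary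
entropy up to a constant, whose only maximum is at `1/2`. -/

open Real Set

section Maximizers

variable {s : Set ℝ} {F : ℝ → ℝ} {m a b : ℝ}

lemma le_add_mul_sub_of_concaveOn_of_hasDerivAt (hF : ConcaveOn ℝ s F) (ha : a ∈ s) (hb : b ∈ s)
    (hd : HasDerivAt F m a) : F b ≤ F a + m * (b - a) := by
  rcases lt_trichotomy a b with hab | rfl | hba
  · have hslope := hF.slope_le_of_hasDerivAt ha hb hab hd
    rw [slope_def_field, div_le_iff₀ (sub_pos.2 hab)] at hslope
    linarith
  · simp
  · have hslope := hF.le_slope_of_hasDerivAt hb ha hba hd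
    rw [slope_def_field, le_div_iff₀ (sub_pos.2 hba)] at hslope
    linarith

lemma mul_sub_pos_of_isMaxOn_of_concaveOn (hF : ConcaveOn ℝ s F) (hb : b ∈ s) (hmax : IsMaxOn F s b)
    (ha : a ∈ interior s) (hd : HasDerivAt F m a) (hm : m ≠ 0) : 0 < m * (b - a) := by
  have has : a ∈ s := interior_subset ha
  have hba : b ≠ a := by
    rintro rfl
    exact hm ((hmax.isLocalMax (mem_interior_iff_mem_nhds.1 ha)).hasDerivAt_eq_zero hd)
  have htangent := le_add_mul_sub_of_concaveOn_of_hasDerivAt hF has hb hd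
  have hab : F a ≤ F b := hmax has
  exact (by linarith : 0 ≤ m * (b - a)).lt_of_ne' (mul_ne_zero hm (sub_ne_zero.2 hba))

lemma isMaxOn_binEntropy_iff (hs : 2⁻¹ ∈ s) : IsMaxOn binEntropy s b ↔ b = 2⁻¹ := by
  rw [← binEntropy_eq_log_two]
  constructor
  · intro hmax
    exact le_antisymm binEntropy_le_log_two (binEntropy_two_inv ▸ hmax hs)
  · intro hb x _
    exact binEntropy_le_log_two.trans_eq hb.symm

end Maximizers

/-- The growth rate of the expected number of solutions at relative distance `δ` from the forced
solution, at clause density `α`, of which `f` is the case `α = 4.25`; any real `α` is allowed. -/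
noncomputable def forcedGrowthRate (α δ : ℝ) : ℝ :=
  binEntropy δ + α * log ((6 + (1 - δ) ^ 3) / 7)

/-- The derivative of `forcedGrowthRate α` on `(0, 1)`. -/
noncomputable def forcedGrowthSlope (α δ : ℝ) : ℝ :=
  log (1 - δ) - log δ - 3 * α * ((1 - δ) ^ 2 / (6 + (1 - δ) ^ 3))

/-- The second derivative of `forcedGrowthRate α` on `(0, 1)`: the clause term minus the entropy
term. -/
noncomputable def forcedGrowthCurvature (α δ : ℝ) : ℝ :=
  3 * α * ((1 - δ) * (12 - (1 - δ) ^ 3) / (6 + (1 - δ) ^ 3) ^ 2) - 1 / (δ * (1 - δ))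

lemma H_eq_binEntropy : H = binEntropy := by
  ext δ
  simp only [H, binEntropy, log_inv]
  ring

lemma f_eq_forcedGrowthRate : f = forcedGrowthRate 4.25 := by
  ext δ
  rw [f, H_eq_binEntropy, forcedGrowthRate]

lemma isMaxOn_g_iff {s : Set ℝ} {δ : ℝ} : IsMaxOn g s δ ↔ IsMaxOn binEntropy s δ := by
  simp only [isMaxOn_iff, g, H_eq_binEntropy, add_le_add_iff_right]

section GrowthRate

variable {α δ : ℝ}

lemma six_add_one_sub_pow_three_pos (hδ : δ ≤ 1) : 0 < 6 + (1 - δ) ^ 3 :=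
  add_pos_of_pos_of_nonneg (by norm_num) (pow_nonneg (sub_nonneg.2 hδ) 3)

lemma hasDerivAt_six_add_one_sub_pow_three :
    HasDerivAt (fun x : ℝ ↦ 6 + (1 - x) ^ 3) (-(3 * (1 - δ) ^ 2)) δ :=
  ((((hasDerivAt_id δ).const_sub 1).pow 3).const_add 6).congr_deriv (by simp)

lemma hasDerivAt_forcedGrowthRate (h₀ : δ ≠ 0) (h₁ : δ ≠ 1) (h₆ : 6 + (1 - δ) ^ 3 ≠ 0) :
    HasDerivAt (forcedGrowthRate α) (forcedGrowthSlope α δ) δ := by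
  have hlog := (hasDerivAt_six_add_one_sub_pow_three.div_const 7).log (div_ne_zero h₆ (by norm_num))
  refine ((hasDerivAt_binEntropy h₀ h₁).add (hlog.const_mul α)).congr_deriv ?_
  rw [forcedGrowthSlope]
  field_simp
  ring

lemma hasDerivAt_forcedGrowthSlope (h₀ : δ ≠ 0) (h₁ : δ ≠ 1) (h₆ : 6 + (1 - δ) ^ 3 ≠ 0) :
    HasDerivAt (forcedGrowthSlope α) (forcedGrowthCurvature α δ) δ := by
  have h₁' : 1 - δ ≠ 0 := sub_ne_zero.2 h₁.symm
  have hsub : HasDerivAt (fun x : ℝ ↦ 1 - x) (-1) δ := (hasDerivAt_id δ).const_sub 1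
  have hratio := (hsub.pow 2).div hasDerivAt_six_add_one_sub_pow_three h₆
  refine (((hsub.log h₁').sub (hasDerivAt_log h₀)).sub (hratio.const_mul (3 * α))).congr_deriv ?_
  simp only [forcedGrowthCurvature, Pi.pow_apply]
  field_simp
  ring

lemma sq_mul_one_sub_le {t : ℝ} (ht : -(1 / 3) ≤ t) : t ^ 2 * (1 - t) ≤ 4 / 27 := by
  rw [← sub_nonneg]
  calc
    0 ≤ (t + 1 / 3) * (t - 2 / 3) ^ 2 := mul_nonneg (by linarith) (sq_nonneg _)
    _ = 4 / 27 - t ^ 2 * (1 - t) := by ring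

lemma forcedGrowthCurvature_nonpos (hα : α ≤ 27 / 4) (hδ : δ ∈ Ioo 0 1) :
    forcedGrowthCurvature α δ ≤ 0 := by
  obtain ⟨t, rfl⟩ : ∃ t, δ = 1 - t := ⟨1 - δ, by ring⟩
  have ht₁ : 0 < 1 - t := hδ.1
  have ht₀ : 0 < t := by linarith [hδ.2]
  have ht₃ : t ^ 3 ≤ 1 := pow_le_one₀ ht₀.le (by linarith)
  have hweight : α * (t ^ 2 * (1 - t)) ≤ 1 := calc
    α * (t ^ 2 * (1 - t)) ≤ 27 / 4 * (4 / 27) := by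
      gcongr
      exact sq_mul_one_sub_le (by linarith)
    _ = 1 := by norm_num
  have hcubic : 3 * (α * (t ^ 2 * (1 - t))) * (12 - t ^ 3) ≤ (6 + t ^ 3) ^ 2 := calc
    3 * (α * (t ^ 2 * (1 - t))) * (12 - t ^ 3) ≤ 3 * 1 * (12 - t ^ 3) := by
      gcongr
      linarith
    _ ≤ (6 + t ^ 3) ^ 2 := by linarith [sq_nonneg (t ^ 3), pow_pos ht₀ 3]
  rw [forcedGrowthCurvature, sub_sub_cancel, sub_nonpos, ← mul_div_assoc,
    div_le_div_iff₀ (by positivity) (by positivity)]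
  linarith

lemma continuousOn_forcedGrowthRate : ContinuousOn (forcedGrowthRate α) (Iic 1) := by
  unfold forcedGrowthRate
  refine binEntropy_continuous.continuousOn.add (continuousOn_const.mul (ContinuousOn.log ?_ ?_))
  · fun_prop
  · exact fun x hx ↦ (div_pos (six_add_one_sub_pow_three_pos hx) (by norm_num)).ne'

lemma concaveOn_forcedGrowthRate (hα : α ≤ 27 / 4) :
    ConcaveOn ℝ (Icc 0 1) (forcedGrowthRate α) := by
  refine concaveOn_of_hasDerivWithinAt2_nonpos (convex_Icc 0 1)
    (continuousOn_forcedGrowthRate.mono Icc_subset_Iic_self)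
    (f' := forcedGrowthSlope α) (f'' := forcedGrowthCurvature α)
    (fun x hx ↦ ?_) (fun x hx ↦ ?_) (fun x hx ↦ ?_)
  all_goals rw [interior_Icc] at hx
  · exact (hasDerivAt_forcedGrowthRate hx.1.ne' hx.2.ne
      (six_add_one_sub_pow_three_pos hx.2.le).ne').hasDerivWithinAt
  · exact (hasDerivAt_forcedGrowthSlope hx.1.ne' hx.2.ne
      (six_add_one_sub_pow_three_pos hx.2.le).ne').hasDerivWithinAt
  · exact forcedGrowthCurvature_nonpos hα hx

lemma forcedGrowthSlope_mul_sub_pos_of_isMaxOn {a : ℝ} (hα : α ≤ 27 / 4) (hδ : δ ∈ Icc 0 1)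
    (hmax : IsMaxOn (forcedGrowthRate α) (Icc 0 1) δ) (ha : a ∈ Ioo 0 1)
    (hslope : forcedGrowthSlope α a ≠ 0) : 0 < forcedGrowthSlope α a * (δ - a) :=
  have hd := hasDerivAt_forcedGrowthRate (α := α) ha.1.ne' ha.2.ne
    (six_add_one_sub_pow_three_pos ha.2.le).ne'
  mul_sub_pos_of_isMaxOn_of_concaveOn (concaveOn_forcedGrowthRate hα) hδ hmax
    (by rwa [interior_Icc]) hd hslope

end GrowthRate

lemma forcedGrowthSlope_twenty_three_hundredths_pos : 0 < forcedGrowthSlope 4.25 0.23 := by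
  have hlog : 12 * log 2 < 7 * log (77 / 23) := by
    have h := log_lt_log (by norm_num) (by norm_num : (2 : ℝ) ^ 12 < (77 / 23) ^ 7)
    rwa [log_pow, log_pow] at h
  have hsub : log (1 - 0.23) - log 0.23 = log (77 / 23) := by
    rw [← log_div (by norm_num) (by norm_num)]
    norm_num
  rw [forcedGrowthSlope, hsub]
  norm_num
  linarith [log_two_gt_d9]

lemma forcedGrowthSlope_one_quarter_neg : forcedGrowthSlope 4.25 0.25 < 0 := by
  have hsub : log (1 - 0.25) - log 0.25 = log 3 := by
    rw [← log_div (by norm_num) (by norm_num)]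
    norm_num
  rw [forcedGrowthSlope, hsub]
  norm_num
  linarith [log_three_lt_d9]

/-- **Solutions of forced random 3-SAT instances cluster near the forced solution**:
every maximizer of `f` over `[0,1]` lies in the open interval `(0.23, 0.25)` — in
particular strictly below `1/2` — whereas `g` attains its maximum over `[0,1]`
exactly at `δ = 1/2`. -/
theorem threeSat_forced_solutions_cluster :
    (∀ δ ∈ Set.Icc (0 : ℝ) 1,
      (∀ x ∈ Set.Icc (0 : ℝ) 1, f x ≤ f δ) → δ ∈ Set.Ioo (0.23 : ℝ) 0.25) ∧
    (∀ δ ∈ Set.Icc (0 : ℝ) 1,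
      ((∀ x ∈ Set.Icc (0 : ℝ) 1, g x ≤ g δ) ↔ δ = 1 / 2)) := by
  refine ⟨fun δ hδ hmax ↦ ?_, fun δ _ ↦ ?_⟩
  · rw [f_eq_forcedGrowthRate] at hmax
    have hpos := forcedGrowthSlope_twenty_three_hundredths_pos
    have hneg := forcedGrowthSlope_one_quarter_neg
    have hleft := forcedGrowthSlope_mul_sub_pos_of_isMaxOn (by norm_num) hδ hmax (by norm_num)
      hpos.ne'
    have hright := forcedGrowthSlope_mul_sub_pos_of_isMaxOn (by norm_num) hδ hmax (by norm_num)
      hneg.ne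
    exact ⟨sub_pos.1 ((pos_iff_pos_of_mul_pos hleft).1 hpos),
      sub_neg.1 ((neg_iff_neg_of_mul_pos hright).1 hneg)⟩
  · rw [← isMaxOn_iff, isMaxOn_g_iff, isMaxOn_binEntropy_iff (by norm_num), one_div]
end
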